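/- arXiv:1907.07499 — 3 statements merged into one kernel-verified Lean document; each statement's English description precedes it below -/
import Mathlib

section
/- Let S₁,…,S_N be an IFS of similitudes on ℝ^d satisfying the OSC and the nesting property, with attractor K. For all nonempty finite words u, v over 𝒜 = {1,…,N} with |u| = |v|, u ≠ v and u⁻ ≠ v⁻, the intersection S_u(K) ∩ S_v(K) contains at most one point. -/
/-- Composition of the maps of an IFS along a finite word:
`Sw S [w₁, …, wₙ] = S w₁ ∘ ⋯ ∘ S wₙ`. -/
def Sw {N d : ℕ} (S : Fin N → EuclideanSpace ℝ (Fin d) → EuclideanSpace ℝ (Fin d)) :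
    List (Fin N) → EuclideanSpace ℝ (Fin d) → EuclideanSpace ℝ (Fin d)
  | [] => id
  | a :: w => S a ∘ Sw S w

/-- The set of essential fixed points `F₀`: those fixed points `q i` which are mapped,
by some pair of maps of the IFS, onto a different fixed point's image. -/
def F0 {N d : ℕ} (S : Fin N → EuclideanSpace ℝ (Fin d) → EuclideanSpace ℝ (Fin d))
    (q : Fin N → EuclideanSpace ℝ (Fin d)) : Set (EuclideanSpace ℝ (Fin d)) :=
  {x | x ∈ Set.range q ∧ ∃ i j : Fin N, ∃ y, y ∈ Set.range q ∧ x ≠ y ∧ S i x = S j y}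

/-!
Let `x` lie in the cells of `u` and `v`. It then lies in the two parent cells, so nesting gives
`x = S_{u⁻} (q k)` for some `k`, and cancelling `S_{u⁻}` gives `q k ∈ S i '' K`, where `i` is the
last letter of `u`. If `i = k`, then `x = S_{u⁻} (q i)` depends on `u` only. If `i ≠ k`, nesting at
level one gives `q k = S i (q l)`, which the open set condition excludes. Indeed the maps
`G m = (S k)^(-m) ∘ S i ∘ (S l)^(n m)`, with `n m` chosen so that their ratios stay bounded away
from `0` and `∞`, all send `q l` to `q k`. For `m < m'`, applying `(S k)^m'` moves `G m '' O` into
`S k '' O` and `G m' '' O` into `S i '' O`, so the sets `G m '' O` are pairwise disjoint; but they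
contain balls of a fixed radius within bounded distance of `q k`, impossible in a proper space.
-/

open Set Dilation

theorem exists_lt_dist_lt_of_isBounded_range {X : Type*} [PseudoMetricSpace X] [ProperSpace X]
    {x : ℕ → X} (hx : Bornology.IsBounded (range x)) {ε : ℝ} (hε : 0 < ε) :
    ∃ m n, m < n ∧ dist (x n) (x m) < ε := by
  obtain ⟨_, -, φ, hφ, hlim⟩ := tendsto_subseq_of_bounded hx mem_range_self
  obtain ⟨k, hk⟩ := Metric.cauchySeq_iff'.1 hlim.cauchySeq ε hε
  exact ⟨φ k, φ (k + 1), hφ k.lt_succ_self, hk (k + 1) k.le_succ⟩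

section DilationEquiv

variable {X : Type*}

theorem exists_lt_image_inter_image_nonempty [PseudoMetricSpace X] [ProperSpace X]
    {g : ℕ → X ≃ᵈ X} {s p : X} (hg : ∀ m, g m s = p) {a b : ℝ} (ha : 0 < a)
    (hratio : ∀ m, (ratio (g m) : ℝ) ∈ Icc a b) {O : Set X} (hO : IsOpen O) (hne : O.Nonempty) :
    ∃ m n, m < n ∧ (g m '' O ∩ g n '' O).Nonempty := by
  obtain ⟨o, ho⟩ := hne
  obtain ⟨r, hr, hball⟩ := Metric.isOpen_iff.1 hO o ho
  have hbdd : Bornology.IsBounded (range fun m => g m o) := by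
    refine (Metric.isBounded_iff_subset_closedBall p).2 ⟨b * dist o s, ?_⟩
    rintro _ ⟨m, rfl⟩
    rw [Metric.mem_closedBall, ← hg m, Dilation.dist_eq]
    gcongr
    exact (hratio m).2
  obtain ⟨m, n, hmn, hdist⟩ := exists_lt_dist_lt_of_isBounded_range hbdd (mul_pos ha hr)
  obtain ⟨z, hz⟩ := (g m).surjective (g n o)
  refine ⟨m, n, hmn, g n o, ⟨z, hball ?_, hz⟩, mem_image_of_mem _ ho⟩
  have hscaled : ratio (g m) * dist z o < ratio (g m) * r :=
    calc ratio (g m) * dist z o = dist (g n o) (g m o) := by rw [← hz, Dilation.dist_eq]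
      _ < a * r := hdist
      _ ≤ ratio (g m) * r := by gcongr; exact (hratio m).1
  exact lt_of_mul_lt_mul_left hscaled (ratio (g m)).coe_nonneg

theorem disjoint_image_inv_pow_mul_of_lt [PseudoEMetricSpace X] {f g h : X ≃ᵈ X} {O : Set X}
    (hf : MapsTo f O O) (hg : MapsTo g O O) (hh : MapsTo h O O)
    (hfg : Disjoint (f '' O) (g '' O)) {m n : ℕ} (hmn : m < n) (a b : ℕ) :
    Disjoint (((f ^ m)⁻¹ * (g * h ^ a)) '' O) (((f ^ n)⁻¹ * (g * h ^ b)) '' O) := by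
  obtain ⟨e, rfl⟩ := Nat.exists_eq_add_of_lt hmn
  rw [Set.disjoint_left]
  rintro _ ⟨x, hx, rfl⟩ ⟨y, hy, hxy⟩
  have hpow (c : ℕ) {z : X} (hz : z ∈ O) : (h ^ c) z ∈ O := by
    rw [DilationEquiv.coe_pow]; exact hh.iterate c hz
  have hcancel : f ((f ^ e) (g ((h ^ a) x))) = g ((h ^ b) y) := by
    have hsplit : f * f ^ e = f ^ (m + e + 1) * (f ^ m)⁻¹ := by group
    calc f ((f ^ e) (g ((h ^ a) x)))
        = (f * f ^ e) ((g * h ^ a) x) := rfl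
      _ = (f ^ (m + e + 1)) (((f ^ m)⁻¹ * (g * h ^ a)) x) := by rw [hsplit]; rfl
      _ = g ((h ^ b) y) := by
        rw [← hxy]; exact (f ^ (m + e + 1)).apply_symm_apply (g ((h ^ b) y))
  refine Set.disjoint_left.1 hfg (mem_image_of_mem f ?_) (hcancel ▸ mem_image_of_mem g (hpow b hy))
  rw [DilationEquiv.coe_pow]
  exact hf.iterate e (hg (hpow a hx))

theorem ratio_inv_pow_mul_mem_Icc [PseudoEMetricSpace X] {f g h : X ≃ᵈ X} {m n : ℕ}
    (hlt : ratio h ^ (n + 1) < ratio f ^ m) (hle : ratio f ^ m ≤ ratio h ^ n) :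
    (ratio ((f ^ m)⁻¹ * (g * h ^ n)) : ℝ) ∈ Icc (ratio g : ℝ) (ratio g / ratio h) := by
  have hfm : 0 < ratio f ^ m := pow_pos (ratio_pos f) m
  have hratio : ratio ((f ^ m)⁻¹ * (g * h ^ n)) = ratio g * (ratio h ^ n / ratio f ^ m) := by
    simp only [DilationEquiv.mul_def, DilationEquiv.ratio_trans, DilationEquiv.ratio_inv,
      DilationEquiv.ratio_pow]
    ring
  have hlower : 1 ≤ ratio h ^ n / ratio f ^ m := (one_le_div hfm).2 hle
  have hupper : ratio h ^ n / ratio f ^ m ≤ (ratio h)⁻¹ := by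
    rw [div_le_iff₀ hfm, ← div_eq_inv_mul, le_div_iff₀ (ratio_pos h), ← pow_succ]
    exact hlt.le
  rw [hratio, div_eq_mul_inv]
  constructor
  · exact_mod_cast le_mul_of_one_le_right' hlower
  · exact_mod_cast mul_le_mul_right hupper (ratio g)

theorem fixedPoint_ne_apply_fixedPoint_of_disjoint_image [PseudoMetricSpace X] [ProperSpace X]
    {f g h : X ≃ᵈ X} (hf1 : ratio f < 1) (hh1 : ratio h < 1) {O : Set X} (hO : IsOpen O)
    (hne : O.Nonempty) (hf : MapsTo f O O) (hg : MapsTo g O O) (hh : MapsTo h O O)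
    (hfg : Disjoint (f '' O) (g '' O)) {p s : X} (hp : f p = p) (hs : h s = s) : p ≠ g s := by
  intro hps
  have hscale (m : ℕ) : ∃ n, ratio h ^ (n + 1) < ratio f ^ m ∧ ratio f ^ m ≤ ratio h ^ n :=
    exists_nat_pow_near_of_lt_one (pow_pos (ratio_pos f) m) (pow_le_one₀ zero_le hf1.le)
      (ratio_pos h) hh1
  choose n hlt hle using hscale
  let G (m : ℕ) : X ≃ᵈ X := (f ^ m)⁻¹ * (g * h ^ n m)
  have hG (m : ℕ) : G m s = p := by
    have hfp : (f ^ m) p = p := by rw [DilationEquiv.coe_pow, Function.iterate_fixed hp]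
    have hhs : (h ^ n m) s = s := by rw [DilationEquiv.coe_pow, Function.iterate_fixed hs]
    calc G m s = (f ^ m).symm (g ((h ^ n m) s)) := rfl
      _ = p := by rw [hhs, ← hps, DilationEquiv.symm_apply_eq, hfp]
  have hratio (m : ℕ) : (ratio (G m) : ℝ) ∈ Icc (ratio g : ℝ) (ratio g / ratio h) :=
    ratio_inv_pow_mul_mem_Icc (hlt m) (hle m)
  obtain ⟨m, m', hmm', hinter⟩ :=
    exists_lt_image_inter_image_nonempty hG (ratio_pos g) hratio hO hne
  exact Set.not_disjoint_iff_nonempty_inter.2 hinter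
    (disjoint_image_inv_pow_mul_of_lt hf hg hh hfg hmm' _ _)

end DilationEquiv

section Cells

variable {ι X : Type*}

/-- The cell `S_w(A)`, used both for the attractor and for the set of fixed points. The maps are
taken in the group `X ≃ᵈ X` of similitudes, so that `S_w` is a product over the letters of `w`. -/
def cell [PseudoEMetricSpace X] (S : ι → X ≃ᵈ X) (A : Set X) (w : List ι) : Set X :=
  (w.map S).prod '' A

theorem cell_append_singleton_inter_subset [PseudoEMetricSpace X] {S : ι → X ≃ᵈ X} {K : Set X}
    {q : ι → X} (hK : ∀ i, MapsTo (S i) K K) (hq : ∀ i, S i (q i) = q i)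
    (hnest : ∀ v w : List ι, v.length = w.length → v ≠ w →
      cell S K v ∩ cell S K w ⊆ cell S (range q) v)
    (hne : ∀ i k l, i ≠ k → q k ≠ S i (q l))
    {u v : List ι} (hlen : u.length = v.length) (huv : u ≠ v) (i j : ι) :
    cell S K (u ++ [i]) ∩ cell S K (v ++ [j]) ⊆ {(u.map S).prod (q i)} := by
  have hparent (w : List ι) (k : ι) : cell S K (w ++ [k]) ⊆ cell S K w := by
    rintro _ ⟨a, ha, rfl⟩
    exact ⟨S k a, hK k ha, by simp⟩
  have hfixed (k : ι) (hk : q k ∈ S i '' K) : k = i := by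
    by_contra hki
    have hqK : q k ∈ K := (hK i).image_subset hk
    obtain ⟨_, ⟨l, rfl⟩, hl⟩ := hnest [i] [k] rfl (by simpa using Ne.symm hki)
      ⟨by simpa [cell] using hk, q k, hqK, by simp [hq]⟩
    exact hne i k l (Ne.symm hki) (by simpa using hl.symm)
  rintro x ⟨hxu, hxv⟩
  obtain ⟨_, ⟨k, rfl⟩, rfl⟩ := hnest u v hlen huv ⟨hparent u i hxu, hparent v j hxv⟩
  obtain ⟨a, ha, hax⟩ := hxu
  have hqa : S i a = q k := (u.map S).prod.injective (by simpa using hax)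
  rw [hfixed k ⟨a, ha, hqa⟩, mem_singleton_iff]

theorem cells_intersect_in_at_most_one_point_general [PseudoMetricSpace X] [ProperSpace X]
    {S : ι → X ≃ᵈ X} (hratio : ∀ i, ratio (S i) < 1) {K : Set X} (hK : ∀ i, MapsTo (S i) K K)
    {O : Set X} (hne : O.Nonempty) (hO : IsOpen O) (hOsub : ∀ i, MapsTo (S i) O O)
    (hOdisj : Pairwise fun i j => Disjoint (S i '' O) (S j '' O))
    {q : ι → X} (hq : ∀ i, S i (q i) = q i)
    (hnest : ∀ v w : List ι, v.length = w.length → v ≠ w →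
      cell S K v ∩ cell S K w ⊆ cell S (range q) v)
    {u v : List ι} (hlen : u.length = v.length) (hdrop : u.dropLast ≠ v.dropLast) :
    (cell S K u ∩ cell S K v).Subsingleton := by
  have hfixed (i k l : ι) (hik : i ≠ k) : q k ≠ S i (q l) :=
    fixedPoint_ne_apply_fixedPoint_of_disjoint_image (hratio k) (hratio l) hO hne (hOsub k)
      (hOsub i) (hOsub l) (hOdisj hik.symm) (hq k) (hq l)
  rcases u.eq_nil_or_concat' with rfl | ⟨u', i, rfl⟩
  · exact absurd (by rw [List.eq_nil_of_length_eq_zero hlen.symm]) hdrop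
  rcases v.eq_nil_or_concat' with rfl | ⟨v', j, rfl⟩
  · simp at hlen
  rw [List.dropLast_concat, List.dropLast_concat] at hdrop
  exact subsingleton_singleton.anti
    (cell_append_singleton_inter_subset hK hq hnest hfixed (by simpa using hlen) hdrop i j)

end Cells

section Euclidean

variable {E : Type*} [NormedAddCommGroup E] [NormedSpace ℝ E] [StrictConvexSpace ℝ E]
  [FiniteDimensional ℝ E]

theorem surjective_of_isometry_of_finiteDimensional {f : E → E} (hf : Isometry f) :
    Function.Surjective f := by
  let A := hf.affineIsometryOfStrictConvexSpace
  have hinj : Function.Injective A.toAffineMap.linear :=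
    A.toAffineMap.linear_injective_iff.2 A.injective
  exact A.toAffineMap.linear_surjective_iff.1 (LinearMap.surjective_of_injective hinj)

theorem exists_dilationEquiv_of_dist_eq_mul [Nontrivial E] {f : E → E} {c : ℝ} (hc : 0 < c)
    (hf : ∀ x y, dist (f x) (f y) = c * dist x y) :
    ∃ T : E ≃ᵈ E, ⇑T = f ∧ (ratio T : ℝ) = c := by
  lift c to NNReal using hc.le
  have hsurj : Function.Surjective f := by
    have hiso : Isometry fun x => (c : ℝ)⁻¹ • f x := Isometry.of_dist_eq fun x y => by
      rw [dist_smul₀, hf, Real.norm_of_nonneg (inv_nonneg.2 hc.le), inv_mul_cancel_left₀ hc.ne']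
    intro y
    obtain ⟨x, hx⟩ := surjective_of_isometry_of_finiteDimensional hiso ((c : ℝ)⁻¹ • y)
    exact ⟨x, smul_right_injective E (inv_ne_zero hc.ne') hx⟩
  let D : E →ᵈ E := mkOfDistEq f ⟨c, NNReal.coe_ne_zero.1 hc.ne', hf⟩
  let T : E ≃ᵈ E := ⟨Equiv.ofBijective D ⟨Dilation.injective D, hsurj⟩, D.edist_eq'⟩
  obtain ⟨x, y, hxy⟩ := exists_pair_ne E
  exact ⟨T, rfl, congrArg _ (ratio_unique_of_dist_ne_zero (dist_ne_zero.2 hxy) (hf x y)).symm⟩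

end Euclidean

theorem Sw_eq_coe_prod {N d : ℕ} (S : Fin N → EuclideanSpace ℝ (Fin d) ≃ᵈ EuclideanSpace ℝ (Fin d))
    (w : List (Fin N)) : Sw (fun i => S i) w = (w.map S).prod := by
  induction w with
  | nil => rfl
  | cons a w ih => rw [Sw, ih, List.map_cons, List.prod_cons, DilationEquiv.coe_mul]

/-- Lemma 2.7: for nested fractals, two distinct cells of the same level
with distinct parents intersect in at most one point. -/
theorem cells_intersect_in_at_most_one_point {d N : ℕ} (hN : 2 ≤ N)
    (S : Fin N → EuclideanSpace ℝ (Fin d) → EuclideanSpace ℝ (Fin d))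
    (c : Fin N → ℝ) (hc : ∀ i, c i ∈ Set.Ioo (0 : ℝ) 1)
    (hS : ∀ i x y, dist (S i x) (S i y) = c i * dist x y)
    (K : Set (EuclideanSpace ℝ (Fin d))) (hKne : K.Nonempty) (hKcomp : IsCompact K)
    (hK : K = ⋃ i, S i '' K)
    (O : Set (EuclideanSpace ℝ (Fin d))) (hOne : O.Nonempty) (hOopen : IsOpen O)
    (hObdd : Bornology.IsBounded O) (hOsub : (⋃ i, S i '' O) ⊆ O)
    (hOdisj : Pairwise fun i j => Disjoint (S i '' O) (S j '' O))
    (q : Fin N → EuclideanSpace ℝ (Fin d)) (hq : ∀ i, S i (q i) = q i)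
    (hnest : ∀ v w : List (Fin N), v.length = w.length → v ≠ w →
      Sw S v '' K ∩ Sw S w '' K = Sw S v '' F0 S q ∩ Sw S w '' F0 S q) :
    ∀ u v : List (Fin N), u ≠ [] → v ≠ [] → u.length = v.length → u ≠ v →
      u.dropLast ≠ v.dropLast →
      (Sw S u '' K ∩ Sw S v '' K).Subsingleton := by
  intro u v _ _ hlen _ hdrop
  rcases subsingleton_or_nontrivial (EuclideanSpace ℝ (Fin d)) with _ | _
  · exact Set.subsingleton_of_subsingleton
  choose T hT hratio using fun i => exists_dilationEquiv_of_dist_eq_mul (hc i).1 (hS i)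
  obtain rfl : (fun i => ⇑(T i)) = S := funext hT
  simp only [Sw_eq_coe_prod] at hnest ⊢
  refine cells_intersect_in_at_most_one_point_general (fun i => ?_)
    (fun i => mapsTo_iff_image_subset.2 ((subset_iUnion _ i).trans hK.ge)) hOne hOopen
    (fun i => mapsTo_iff_image_subset.2 ((subset_iUnion _ i).trans hOsub)) hOdisj hq
    (fun v w hvw hne => ?_) hlen hdrop
  · exact_mod_cast (hratio i).trans_lt (hc i).2
  · exact (hnest v w hvw hne).trans_subset
      (inter_subset_left.trans (image_mono fun _ hx => hx.1))
end

section
/- Let S₁,…,S_N be an IFS of similitudes on ℝ^d satisfying the OSC and the nesting property, with attractor K. Then the relation ∼ on finite words, defined by v ∼ w iff v = w or (|v| = |w|, S_v(K) ∩ S_w(K) ≠ ∅ and v⁻ ≠ w⁻), is transitive; consequently ∼ is an equivalence relation. -/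
/-!
For a word `va` ending in the letter `a` consider the point `S_v(q_a) = S_{va}(q_a)` of its cell.
If the cells of two words `va` and `wb` of equal length with `v ≠ w` share a point `x`, nesting
applied to `va, wb` and to `v, w` gives `x = S_{va}(q_i) = S_v(q_j)` for some `i, j`, whence
`S_a(q_i) = q_j`. The open set condition forces `a = j`, so `x = S_v(q_a)`, and symmetrically
`x = S_w(q_b)`. Hence `v ∼ w` holds exactly when `v` and `w` have the same length and the same
associated point.

That `S_k(q_i) = q_j` forces `k = j` is seen by blowing up at `q_j`. If `k ≠ j`, the sets
`S_j^{-m} S_k S_i^n(O)`, with `n = n(m)` chosen so that their sizes are comparable to that of `O`,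
are pairwise disjoint, yet all lie within a bounded distance of `q_j`.
-/

open Set Metric

section Similitudes

variable {X : Type*} [MetricSpace X] {f g h : X → X} {a b c : ℝ}

/-- `f` is a surjective similitude with ratio `c > 0`. Unlike in `Dilation`, the ratio is explicit,
since `Dilation.ratio` is always `1` on a space with at most one point. -/
structure IsSimilitude (c : ℝ) (f : X → X) : Prop where
  pos : 0 < c
  dist_eq : ∀ x y, dist (f x) (f y) = c * dist x y
  surjective : Function.Surjective f

lemma surjective_of_dist_eq_mul {E : Type*} [NormedAddCommGroup E] [NormedSpace ℝ E]
    [StrictConvexSpace ℝ E] [FiniteDimensional ℝ E] {f : E → E} (hc : 0 < c)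
    (hf : ∀ x y, dist (f x) (f y) = c * dist x y) : Function.Surjective f := by
  have rescaled : Isometry fun x => c⁻¹ • f x := Isometry.of_dist_eq fun x y => by
    rw [dist_smul₀, hf, Real.norm_of_nonneg (inv_nonneg.2 hc.le), inv_mul_cancel_left₀ hc.ne']
  have : Inhabited E := ⟨0⟩
  intro y
  obtain ⟨x, hx⟩ := (rescaled.affineIsometryOfStrictConvexSpace.toAffineIsometryEquiv
    rfl).surjective (c⁻¹ • y)
  exact ⟨x, smul_right_injective E (inv_ne_zero hc.ne') hx⟩

namespace IsSimilitude

lemma injective (hf : IsSimilitude c f) : Function.Injective f := fun x y hxy => by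
  simpa [hxy, hf.pos.ne'] using hf.dist_eq x y

lemma comp (hf : IsSimilitude a f) (hg : IsSimilitude b g) : IsSimilitude (a * b) (f ∘ g) where
  pos := mul_pos hf.pos hg.pos
  dist_eq x y := by simp only [Function.comp_apply, hf.dist_eq, hg.dist_eq, mul_assoc]
  surjective := hf.surjective.comp hg.surjective

lemma iterate (hf : IsSimilitude c f) : ∀ n : ℕ, IsSimilitude (c ^ n) f^[n]
  | 0 => ⟨by simp, by simp, Function.surjective_id⟩
  | n + 1 => by
    rw [Function.iterate_succ, pow_succ]
    exact (hf.iterate n).comp hf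

lemma mul_le_dist_of_notMem_image (hf : IsSimilitude c f) {O : Set X} {x y : X} {r : ℝ}
    (hO : ball x r ⊆ O) (hy : y ∉ f '' O) : c * r ≤ dist y (f x) := by
  obtain ⟨z, rfl⟩ := hf.surjective y
  rw [hf.dist_eq]
  refine mul_le_mul_of_nonneg_left (not_lt.1 fun hz => ?_) hf.pos.le
  exact hy (mem_image_of_mem f (hO hz))

lemma fixedPoint_mem_of_mapsTo (hf : IsSimilitude c f) (hc : c < 1) {K : Set X} (hK : IsClosed K)
    (hne : K.Nonempty) (hfK : MapsTo f K K) {p : X} (hp : f p = p) : p ∈ K := by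
  obtain ⟨x, hx⟩ := hne
  have dist_iterate (n : ℕ) : dist (f^[n] x) p = c ^ n * dist x p := by
    rw [← (hf.iterate n).dist_eq, Function.iterate_fixed hp]
  refine hK.mem_of_tendsto (f := fun n => f^[n] x) (b := Filter.atTop) ?_
    (.of_forall fun n => hfK.iterate n hx)
  rw [tendsto_iff_dist_tendsto_zero]
  simpa only [dist_iterate, zero_mul] using
    (tendsto_pow_atTop_nhds_zero_of_lt_one hf.pos.le hc).mul_const (dist x p)

end IsSimilitude

lemma finite_of_isBounded_range_of_pairwise_le_dist [ProperSpace X] {α : Type*} {u : α → X}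
    {ε : ℝ} (hε : 0 < ε) (hbdd : Bornology.IsBounded (range u))
    (hsep : Pairwise fun m n => ε ≤ dist (u m) (u n)) : Finite α := by
  let : TopologicalSpace α := ⊥
  have : DiscreteTopology α := ⟨rfl⟩
  have hu := isClosedEmbedding_of_pairwise_le_dist hε hsep
  have range_compact : IsCompact (range u) := isCompact_of_isClosed_isBounded hu.isClosed_range hbdd
  have : CompactSpace α := ⟨by simpa using hu.isCompact_preimage range_compact⟩
  exact finite_of_compact_of_discrete

lemma IsSimilitude.dist_le_of_iterate_eq (hf : IsSimilitude a f) (hg : IsSimilitude b g)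
    (hh : IsSimilitude c h) {m n : ℕ} (hac : a ^ (n + 1) ≤ c ^ m) {p o x : X} (hp : f p = p)
    (hgp : h (g p) = g p) (hx : h^[m] x = g (f^[n] o)) :
    dist x (g p) ≤ b / a * dist o p := by
  have hf_pos := hf.pos
  have hg_pos := hg.pos
  refine le_of_mul_le_mul_left ?_ (pow_pos hh.pos m)
  calc c ^ m * dist x (g p)
      = dist (h^[m] x) (h^[m] (g p)) := ((hh.iterate m).dist_eq _ _).symm
    _ = dist (g (f^[n] o)) (g (f^[n] p)) := by
      rw [hx, Function.iterate_fixed hgp, Function.iterate_fixed hp]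
    _ = a ^ (n + 1) * (b / a * dist o p) := by
      rw [hg.dist_eq, (hf.iterate n).dist_eq]
      field_simp
      ring
    _ ≤ c ^ m * (b / a * dist o p) := by gcongr

lemma IsSimilitude.mul_le_pow_mul_dist_of_iterate_eq (hg : IsSimilitude b g)
    (hh : IsSimilitude c h) {O : Set X} (hhO : MapsTo h O O) (hdisj : Disjoint (g '' O) (h '' O))
    {o x y : X} {r : ℝ} (hball : ball o r ⊆ O) {m k : ℕ} (hmk : m < k) (hx : h^[m] x ∈ O)
    (hy : h^[k] y = g o) : b * r ≤ c ^ k * dist x y := by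
  obtain ⟨s, rfl⟩ := Nat.exists_eq_add_of_lt hmk
  have hx_mem : h^[m + s + 1] x ∈ h '' O := by
    rw [add_assoc, add_comm, Function.iterate_add_apply, Function.iterate_succ_apply']
    exact mem_image_of_mem h (hhO.iterate s hx)
  rw [← (hh.iterate _).dist_eq, hy]
  exact hg.mul_le_dist_of_notMem_image hball (disjoint_right.1 hdisj hx_mem)

lemma IsSimilitude.apply_ne_of_disjoint_image [ProperSpace X] {O : Set X} (hO : IsOpen O)
    (hOne : O.Nonempty) (hf : IsSimilitude a f) (ha : a < 1) (hg : IsSimilitude b g)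
    (hh : IsSimilitude c h) (hc : c < 1) (hfO : MapsTo f O O) (hgO : MapsTo g O O)
    (hhO : MapsTo h O O) (hdisj : Disjoint (g '' O) (h '' O)) {p q : X} (hp : f p = p)
    (hq : h q = q) : g p ≠ q := by
  rintro rfl
  obtain ⟨o, ho⟩ := hOne
  obtain ⟨r, hr, hball⟩ := Metric.isOpen_iff.1 hO o ho
  choose n hn_lt hn_le using fun m : ℕ => exists_nat_pow_near_of_lt_one (pow_pos hh.pos m)
    (pow_le_one₀ hh.pos.le hc.le) hf.pos ha
  choose u hu using fun m : ℕ => (hh.iterate m).surjective (g (f^[n m] o))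
  have bounded : Bornology.IsBounded (range u) :=
    isBounded_closedBall.subset <| range_subset_iff.2 fun m =>
      hf.dist_le_of_iterate_eq hg hh (hn_lt m).le hp hq (hu m)
  have le_dist {m k : ℕ} (hmk : m < k) : b * r ≤ dist (u m) (u k) := by
    have hum : h^[m] (u m) ∈ O := hu m ▸ hgO (hfO.iterate _ ho)
    have disj_gf : Disjoint ((g ∘ f^[n k]) '' O) (h '' O) :=
      hdisj.mono_left (image_comp g _ O ▸ image_mono (hfO.iterate _).image_subset)
    refine le_of_mul_le_mul_left ?_ (pow_pos hh.pos k)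
    calc c ^ k * (b * r) ≤ a ^ n k * (b * r) :=
          mul_le_mul_of_nonneg_right (hn_le k) (mul_pos hg.pos hr).le
      _ = b * a ^ n k * r := by ring
      _ ≤ c ^ k * dist (u m) (u k) :=
          (hg.comp (hf.iterate _)).mul_le_pow_mul_dist_of_iterate_eq hh hhO disj_gf hball hmk hum
            (hu k)
  have separated : Pairwise fun m k => b * r ≤ dist (u m) (u k) := fun m k hmk =>
    hmk.lt_or_gt.elim le_dist fun hkm => (le_dist hkm).trans_eq (dist_comm _ _)
  exact not_finite_iff_infinite.2 inferInstance
    (finite_of_isBounded_range_of_pairwise_le_dist (mul_pos hg.pos hr) bounded separated)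

end Similitudes

section Words

variable {ι X : Type*} {S : ι → X → X} {q : ι → X} {K : Set X}

/-- The composition `S_w = S_{w₁} ∘ ⋯ ∘ S_{wₙ}` along a word, for self-maps of any type. -/
def wordMap (S : ι → X → X) (w : List ι) (x : X) : X :=
  w.foldr S x

/-- The relation `∼` on words, with the cells `S_w(K)` formed from an arbitrary set `K`. -/
def WordSim (S : ι → X → X) (K : Set X) (v w : List ι) : Prop :=
  v = w ∨ (v.length = w.length ∧ (wordMap S v '' K ∩ wordMap S w '' K).Nonempty ∧
    v.dropLast ≠ w.dropLast)

/-- The point `S_w(q_a)` attached to a word `w` with last letter `a`, and `none` for the empty word.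
In a nested fractal it is the only point at which the cell of `w` can meet the cell of a word of the
same length with a different parent. -/
def cellVertex (S : ι → X → X) (q : ι → X) (w : List ι) : Option X :=
  w.getLast?.map fun a => wordMap S w (q a)

lemma wordMap_append (v w : List ι) (x : X) :
    wordMap S (v ++ w) x = wordMap S v (wordMap S w x) :=
  List.foldr_append

lemma wordMap_concat (v : List ι) (a : ι) (x : X) :
    wordMap S (v ++ [a]) x = wordMap S v (S a x) :=
  wordMap_append v [a] x

lemma wordMap_injective (hS : ∀ i, Function.Injective (S i)) :
    ∀ w : List ι, Function.Injective (wordMap S w)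
  | [] => Function.injective_id
  | a :: w => (hS a).comp (wordMap_injective hS w)

lemma wordMap_concat_image_subset (hK : ∀ i, MapsTo (S i) K K) (v : List ι) (a : ι) :
    wordMap S (v ++ [a]) '' K ⊆ wordMap S v '' K := by
  rintro _ ⟨x, hx, rfl⟩
  exact ⟨S a x, hK a hx, (wordMap_concat v a x).symm⟩

lemma cellVertex_concat (hq : ∀ i, S i (q i) = q i) (v : List ι) (a : ι) :
    cellVertex S q (v ++ [a]) = some (wordMap S v (q a)) := by
  simp [cellVertex, wordMap_concat, hq]

lemma eq_wordMap_of_mem_image_inter_image (hinj : ∀ i, Function.Injective (S i))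
    (hfix : ∀ i j k, S k (q i) = q j → k = j) (hK : ∀ i, MapsTo (S i) K K)
    (hnest : ∀ v w : List ι, v.length = w.length → v ≠ w →
      wordMap S v '' K ∩ wordMap S w '' K ⊆ wordMap S v '' range q)
    {v w : List ι} {a b : ι} (hlen : v.length = w.length) (hne : v ≠ w) {x : X}
    (hx : x ∈ wordMap S (v ++ [a]) '' K ∩ wordMap S (w ++ [b]) '' K) :
    x = wordMap S v (q a) := by
  obtain ⟨_, ⟨i, rfl⟩, hi⟩ := hnest (v ++ [a]) (w ++ [b]) (by simpa using hlen)
    (fun h => hne (by simpa using congrArg List.dropLast h)) hx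
  obtain ⟨_, ⟨j, rfl⟩, hj⟩ := hnest v w hlen hne
    (inter_subset_inter (wordMap_concat_image_subset hK v a)
      (wordMap_concat_image_subset hK w b) hx)
  have image_fixed : S a (q i) = q j :=
    wordMap_injective hinj v (by rw [← wordMap_concat, hi, hj])
  rw [← hj, hfix i j a image_fixed]

lemma wordSim_concat_iff (hinj : ∀ i, Function.Injective (S i)) (hq : ∀ i, S i (q i) = q i)
    (hfix : ∀ i j k, S k (q i) = q j → k = j) (hK : ∀ i, MapsTo (S i) K K) (hqK : ∀ i, q i ∈ K)
    (hnest : ∀ v w : List ι, v.length = w.length → v ≠ w →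
      wordMap S v '' K ∩ wordMap S w '' K ⊆ wordMap S v '' range q)
    {v w : List ι} {a b : ι} :
    WordSim S K (v ++ [a]) (w ++ [b]) ↔
      v.length = w.length ∧ wordMap S v (q a) = wordMap S w (q b) := by
  have vertex_mem (v : List ι) (a : ι) : wordMap S v (q a) ∈ wordMap S (v ++ [a]) '' K :=
    ⟨q a, hqK a, by rw [wordMap_concat, hq]⟩
  simp only [WordSim, List.length_append, List.length_singleton, Nat.add_right_cancel_iff,
    List.dropLast_concat]
  constructor
  · rintro (heq | ⟨hlen, ⟨x, hxv, hxw⟩, hne⟩)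
    · obtain ⟨rfl, rfl⟩ := List.append_singleton_inj.1 heq
      exact ⟨rfl, rfl⟩
    · have hv : x = wordMap S v (q a) :=
        eq_wordMap_of_mem_image_inter_image hinj hfix hK hnest hlen hne ⟨hxv, hxw⟩
      have hw : x = wordMap S w (q b) :=
        eq_wordMap_of_mem_image_inter_image hinj hfix hK hnest hlen.symm hne.symm ⟨hxw, hxv⟩
      exact ⟨hlen, hv.symm.trans hw⟩
  · rintro ⟨hlen, heq⟩
    rcases eq_or_ne v w with rfl | hne
    · have hqab : q a = q b := wordMap_injective hinj v heq
      exact .inl (by rw [hfix a b a (by rw [hq, hqab])])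
    · exact .inr ⟨hlen, ⟨_, vertex_mem v a, heq ▸ vertex_mem w b⟩, hne⟩

lemma wordSim_iff (hinj : ∀ i, Function.Injective (S i)) (hq : ∀ i, S i (q i) = q i)
    (hfix : ∀ i j k, S k (q i) = q j → k = j) (hK : ∀ i, MapsTo (S i) K K) (hqK : ∀ i, q i ∈ K)
    (hnest : ∀ v w : List ι, v.length = w.length → v ≠ w →
      wordMap S v '' K ∩ wordMap S w '' K ⊆ wordMap S v '' range q)
    {v w : List ι} :
    WordSim S K v w ↔ v.length = w.length ∧ cellVertex S q v = cellVertex S q w := by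
  rcases v.eq_nil_or_concat' with rfl | ⟨v, a, rfl⟩ <;>
    rcases w.eq_nil_or_concat' with rfl | ⟨w, b, rfl⟩
  · simp [WordSim]
  · simp [WordSim]
  · simp [WordSim]
  · simp only [wordSim_concat_iff hinj hq hfix hK hqK hnest, cellVertex_concat hq,
      List.length_append, List.length_singleton, Nat.add_right_cancel_iff, Option.some_inj]

end Words

theorem sim_is_equivalence_general {ι X : Type*} [MetricSpace X] [ProperSpace X]
    {S : ι → X → X} {c : ι → ℝ} (hS : ∀ i, IsSimilitude (c i) (S i)) (hc : ∀ i, c i < 1)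
    {K : Set X} (hKne : K.Nonempty) (hKclosed : IsClosed K) (hK : ∀ i, MapsTo (S i) K K)
    {O : Set X} (hOne : O.Nonempty) (hOopen : IsOpen O) (hO : ∀ i, MapsTo (S i) O O)
    (hOdisj : Pairwise fun i j => Disjoint (S i '' O) (S j '' O))
    {q : ι → X} (hq : ∀ i, S i (q i) = q i)
    (hnest : ∀ v w : List ι, v.length = w.length → v ≠ w →
      wordMap S v '' K ∩ wordMap S w '' K ⊆ wordMap S v '' range q) :
    Equivalence (WordSim S K) := by
  have hinj (i : ι) : Function.Injective (S i) := (hS i).injective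
  have hqK (i : ι) : q i ∈ K :=
    (hS i).fixedPoint_mem_of_mapsTo (hc i) hKclosed hKne (hK i) (hq i)
  have hfix (i j k : ι) : S k (q i) = q j → k = j := not_imp_not.1 fun hkj =>
    IsSimilitude.apply_ne_of_disjoint_image hOopen hOne (hS i) (hc i) (hS k) (hS j) (hc j)
      (hO i) (hO k) (hO j) (hOdisj hkj) (hq i) (hq j)
  have sim_eq_ker : WordSim S K = fun v w =>
      (v.length, cellVertex S q v) = (w.length, cellVertex S q w) := by
    ext v w
    rw [wordSim_iff hinj hq hfix hK hqK hnest, Prod.mk.injEq]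
  rw [sim_eq_ker]
  exact eq_equivalence.comap _

lemma Sw_eq_wordMap {N d : ℕ} (S : Fin N → EuclideanSpace ℝ (Fin d) → EuclideanSpace ℝ (Fin d)) :
    Sw S = wordMap S := by
  ext1 w
  induction w with
  | nil => rfl
  | cons a w ih => exact congrArg (S a ∘ ·) ih

lemma F0_subset_range {N d : ℕ}
    (S : Fin N → EuclideanSpace ℝ (Fin d) → EuclideanSpace ℝ (Fin d))
    (q : Fin N → EuclideanSpace ℝ (Fin d)) : F0 S q ⊆ Set.range q :=
  fun _ hx => hx.1

/-- Proposition 2.8: for nested fractals the relation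
v ∼ w ⇔ v = w or (|v|=|w|, S_v(K)∩S_w(K)≠∅ and v⁻ ≠ w⁻) is transitive,
hence an equivalence relation. -/
theorem sim_is_equivalence {d N : ℕ} (hN : 2 ≤ N)
    (S : Fin N → EuclideanSpace ℝ (Fin d) → EuclideanSpace ℝ (Fin d))
    (c : Fin N → ℝ) (hc : ∀ i, c i ∈ Set.Ioo (0 : ℝ) 1)
    (hS : ∀ i x y, dist (S i x) (S i y) = c i * dist x y)
    (K : Set (EuclideanSpace ℝ (Fin d))) (hKne : K.Nonempty) (hKcomp : IsCompact K)
    (hK : K = ⋃ i, S i '' K)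
    (O : Set (EuclideanSpace ℝ (Fin d))) (hOne : O.Nonempty) (hOopen : IsOpen O)
    (hObdd : Bornology.IsBounded O) (hOsub : (⋃ i, S i '' O) ⊆ O)
    (hOdisj : Pairwise fun i j => Disjoint (S i '' O) (S j '' O))
    (q : Fin N → EuclideanSpace ℝ (Fin d)) (hq : ∀ i, S i (q i) = q i)
    (hnest : ∀ v w : List (Fin N), v.length = w.length → v ≠ w →
      Sw S v '' K ∩ Sw S w '' K = Sw S v '' F0 S q ∩ Sw S w '' F0 S q) :
    Equivalence (fun v w : List (Fin N) =>
      v = w ∨ (v.length = w.length ∧ (Sw S v '' K ∩ Sw S w '' K).Nonempty ∧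
        v.dropLast ≠ w.dropLast)) := by
  have hsim (i : Fin N) : IsSimilitude (c i) (S i) :=
    ⟨(hc i).1, hS i, surjective_of_dist_eq_mul (hc i).1 (hS i)⟩
  simp only [Sw_eq_wordMap] at hnest ⊢
  exact sim_is_equivalence_general hsim (fun i => (hc i).2) hKne hKcomp.isClosed
    (fun i => mapsTo_iff_image_subset.2 ((subset_iUnion _ i).trans hK.superset)) hOne hOopen
    (fun i => mapsTo_iff_image_subset.2 ((subset_iUnion _ i).trans hOsub)) hOdisj hq
    fun v w hlen hne => (hnest v w hlen hne).subset.trans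
      (inter_subset_left.trans (image_mono (F0_subset_range S q)))
end

section
/- Let v, w, w̃ ∈ 𝒲 with w nonempty, w̃ ∼ w, v ≠ w and v ≠ w̃. If the parents are equivalent, w⁻ ∼ (w̃)⁻, then q(v,w) = q(v,w̃). -/
open Classical

namespace Martin

/-- Finite words over the alphabet `Fin N` (the empty list is the empty word `∅`;
`w ++ [i]` is the word `wi` and `w.dropLast` is the parent `w⁻`). -/
abbrev Word (N : ℕ) := List (Fin N)

/-- The mass of a word: `m(w₁⋯wₙ) = m(w₁)⋯m(wₙ)`, `m(∅) = 1`. -/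
noncomputable def mW {N : ℕ} (m : Fin N → ℝ) (w : Word N) : ℝ := (w.map m).prod

/-- Total mass of the equivalence class of `v`: `Σ_{v̂ ∼ v} m(v̂)`. -/
noncomputable def massCl {N : ℕ} (sim : Word N → Word N → Prop) (m : Fin N → ℝ)
    (v : Word N) : ℝ :=
  ∑ᶠ u ∈ {u : Word N | sim u v}, mW m u

/-- Transition probability: `p(v,w) = m(w)/(Σ_{v̂∼v} m(v̂))` if `w = v̂i` for some
`v̂ ∼ v`, `i ∈ 𝒜`, and `0` otherwise. -/
noncomputable def pTrans {N : ℕ} (sim : Word N → Word N → Prop) (m : Fin N → ℝ)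
    (v w : Word N) : ℝ :=
  if ∃ v' : Word N, ∃ i : Fin N, sim v' v ∧ w = v' ++ [i] then mW m w / massCl sim m v
  else 0

/-- `n`-step transition probabilities: `p₀(v,w) = δ_v(w)`,
`pₙ(v,w) = Σ_u pₙ₋₁(v,u) p(u,w)`. -/
noncomputable def pn {N : ℕ} (sim : Word N → Word N → Prop) (m : Fin N → ℝ) :
    ℕ → Word N → Word N → ℝ
  | 0, v, w => if w = v then 1 else 0
  | n + 1, v, w => ∑ᶠ u : Word N, pn sim m n v u * pTrans sim m u w

/-- The Green function `g(v,w) = p_{|w|−|v|}(v,w)` (it equals `0` when `|w| < |v|`,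
by truncated subtraction and since then `v ≠ w`). -/
noncomputable def green {N : ℕ} (sim : Word N → Word N → Prop) (m : Fin N → ℝ)
    (v w : Word N) : ℝ :=
  pn sim m (w.length - v.length) v w

/-- The function `q(v,w) = g(v,w)·(Σ_{v̂∼v} m(v̂))/m(w)` for `v ≠ w`, `q(v,v) = 1`. -/
noncomputable def qfun {N : ℕ} (sim : Word N → Word N → Prop) (m : Fin N → ℝ)
    (v w : Word N) : ℝ :=
  if v = w then 1 else green sim m v w * massCl sim m v / mW m w

/-- The Martin kernel `k(v,w) = g(v,w)/g(∅,w)`. -/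
noncomputable def mkernel {N : ℕ} (sim : Word N → Word N → Prop) (m : Fin N → ℝ)
    (v w : Word N) : ℝ :=
  green sim m v w / green sim m [] w

/-- `R(w)`: the number of words equivalent to `w`. -/
noncomputable def Rnum {N : ℕ} (sim : Word N → Word N → Prop) (w : Word N) : ℕ :=
  Set.ncard {u : Word N | sim u w}

/-- Assumption (B2): for every word `w`, either all equivalent words have the same mass,
or all equivalent words have equivalent parents. -/
def B2 {N : ℕ} (sim : Word N → Word N → Prop) (m : Fin N → ℝ) : Prop :=
  ∀ w : Word N, (∀ w', sim w' w → mW m w' = mW m w) ∨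
    (∀ w', sim w' w → sim w'.dropLast w.dropLast)

/-!
The step `p(u, wi)` equals `m(wi)` divided by the mass of the class of `w` if `u ∼ w`, and
vanishes otherwise. Conditioning on the last step before `wi` therefore gives
`q(v, wi) = (Σ_{u ∼ w} g(v, u)) · (Σ_{v̂ ∼ v} m(v̂)) / (Σ_{ŵ ∼ w} m(ŵ))`,
in which `i` does not occur and `w` enters only through its equivalence class.
-/

section

variable {N : ℕ} {sim : Word N → Word N → Prop} {m : Fin N → ℝ} {u v w : Word N}

lemma mW_pos (hm : ∀ a, 0 < m a) : 0 < mW m w :=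
  List.prod_pos (by simpa using fun a _ ↦ hm a)

lemma setOf_sim_congr (hsim : Equivalence sim) (h : sim v w) : {u | sim u v} = {u | sim u w} :=
  Set.ext fun _ ↦ ⟨fun hu ↦ hsim.trans hu h, fun hu ↦ hsim.trans hu (hsim.symm h)⟩

lemma massCl_congr (hsim : Equivalence sim) (h : sim v w) :
    massCl sim m v = massCl sim m w := by
  rw [massCl, massCl, setOf_sim_congr hsim h]

lemma exists_sim_and_eq_append_iff (hw : w ≠ []) :
    (∃ v' : Word N, ∃ i : Fin N, sim v' u ∧ w = v' ++ [i]) ↔ sim w.dropLast u := by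
  constructor
  · rintro ⟨v', i, hv', rfl⟩
    rwa [List.dropLast_concat]
  · exact fun h ↦ ⟨w.dropLast, w.getLast hw, h, (List.dropLast_append_getLast hw).symm⟩

lemma pTrans_eq_ite (hsim : Equivalence sim) (hw : w ≠ []) :
    pTrans sim m u w = if sim u w.dropLast then mW m w / massCl sim m w.dropLast else 0 := by
  rw [pTrans, exists_sim_and_eq_append_iff hw]
  by_cases h : sim u w.dropLast
  · rw [if_pos h, if_pos (hsim.symm h), massCl_congr hsim h]
  · rw [if_neg h, if_neg fun h' ↦ h (hsim.symm h')]

lemma pn_succ_eq_mul_finsum (hsim : Equivalence sim) (n : ℕ) (hw : w ≠ []) :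
    pn sim m (n + 1) v w =
      mW m w / massCl sim m w.dropLast * ∑ᶠ u ∈ {u | sim u w.dropLast}, pn sim m n v u := by
  rw [pn, finsum_mem_def, ← smul_eq_mul, smul_finsum]
  refine finsum_congr fun u ↦ ?_
  rw [pTrans_eq_ite hsim hw, smul_eq_mul]
  by_cases hu : sim u w.dropLast
  · rw [if_pos hu, Set.indicator_of_mem (s := {u | sim u w.dropLast}) hu, mul_comm]
  · rw [if_neg hu, Set.indicator_of_notMem (s := {u | sim u w.dropLast}) hu, mul_zero, mul_zero]

lemma green_eq_zero_of_length_le (hvw : v ≠ w) (h : w.length ≤ v.length) :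
    green sim m v w = 0 := by
  rw [green, Nat.sub_eq_zero_of_le h, pn, if_neg hvw.symm]

lemma green_eq_mul_finsum (hsim : Equivalence sim)
    (hlen : ∀ v w : Word N, sim v w → v.length = w.length) (hw : w ≠ []) (hvw : v ≠ w) :
    green sim m v w =
      mW m w / massCl sim m w.dropLast * ∑ᶠ u ∈ {u | sim u w.dropLast}, green sim m v u := by
  have hw_pos : 0 < w.length := List.length_pos_of_ne_nil hw
  have hlen_class : ∀ u, sim u w.dropLast → u.length = w.length - 1 := fun u hu ↦
    (hlen u _ hu).trans List.length_dropLast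
  rcases le_or_gt w.length v.length with hle | hlt
  · have hzero : ∀ u ∈ {u | sim u w.dropLast}, green sim m v u = 0 := fun u hu ↦ by
      have hu_len := hlen_class u hu
      exact green_eq_zero_of_length_le (by rintro rfl; omega) (by omega)
    rw [green_eq_zero_of_length_le hvw hle, finsum_mem_of_eqOn_zero hzero, mul_zero]
  · have hsub : w.length - v.length = w.length - 1 - v.length + 1 := by omega
    rw [green, hsub, pn_succ_eq_mul_finsum hsim _ hw]
    congr 1
    refine finsum_mem_congr rfl fun u hu ↦ ?_
    rw [green, hlen_class u hu]

lemma qfun_eq_finsum_mul_div (hsim : Equivalence sim)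
    (hlen : ∀ v w : Word N, sim v w → v.length = w.length) (hm : ∀ a, 0 < m a)
    (hw : w ≠ []) (hvw : v ≠ w) :
    qfun sim m v w =
      (∑ᶠ u ∈ {u | sim u w.dropLast}, green sim m v u) * massCl sim m v /
        massCl sim m w.dropLast := by
  have hmw : mW m w ≠ 0 := (mW_pos hm).ne'
  rw [qfun, if_neg hvw, green_eq_mul_finsum hsim hlen hw hvw]
  field_simp

end

theorem qfun_of_parent_sim_general {N : ℕ} {sim : Word N → Word N → Prop}
    (hsim : Equivalence sim) (hlen : ∀ v w : Word N, sim v w → v.length = w.length)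
    {m : Fin N → ℝ} (hm : ∀ a, 0 < m a) {v w wt : Word N} (hw : w ≠ []) (hwt : wt ≠ [])
    (hvw : v ≠ w) (hvwt : v ≠ wt) (hp : sim w.dropLast wt.dropLast) :
    qfun sim m v w = qfun sim m v wt := by
  rw [qfun_eq_finsum_mul_div hsim hlen hm hw hvw, qfun_eq_finsum_mul_div hsim hlen hm hwt hvwt,
    setOf_sim_congr hsim hp, massCl_congr hsim hp]

/-- Proposition 3.9: if `w̃ ∼ w` have equivalent parents then
`q(v,w) = q(v,w̃)`. -/
theorem qfun_of_parent_sim {N : ℕ} (hN : 2 ≤ N)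
    (sim : Word N → Word N → Prop) (hsim : Equivalence sim)
    (hlen : ∀ v w : Word N, sim v w → v.length = w.length)
    (m : Fin N → ℝ) (hm : ∀ a, m a ∈ Set.Ioo (0 : ℝ) 1)
    (hm1 : ∑ a, m a = 1) :
    ∀ v w wt : Word N, w ≠ [] → sim wt w → v ≠ w → v ≠ wt →
      sim w.dropLast wt.dropLast → qfun sim m v w = qfun sim m v wt := by
  intro v w wt hw hs hvw hvwt hp
  have hwt : wt ≠ [] := List.ne_nil_of_length_pos (hlen wt w hs ▸ List.length_pos_of_ne_nil hw)
  exact qfun_of_parent_sim_general hsim hlen (fun a ↦ (hm a).1) hw hwt hvw hvwt hp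

end Martin
end
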